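/- arXiv:2309.08598 — 2 statements merged into one kernel-verified Lean document; each statement's English description precedes it below -/
import Mathlib

section
/- Let f : ℝ^k → (0,∞) be locally integrable and weakly differentiable with weak gradient ∇f. If |∇f|/f and log f are locally integrable, then log f is weakly differentiable with weak gradient ∇f/f; that is, ∫ (div h) · log f dx = −∫ h · (∇f/f) dx for every smooth compactly supported vector field h : ℝ^k → ℝ^k. -/
open MeasureTheory
open scoped RealInnerProductSpace

noncomputable section

variable {k : ℕ}

local notation "E" => EuclideanSpace ℝ (Fin k)

/-- The divergence of a vector field on `ℝ^k`, as the trace of its Jacobian. -/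
def dvg (h : E → E) (x : E) : ℝ :=
  ∑ i : Fin k, ⟪fderiv ℝ h x (EuclideanSpace.single i 1), EuclideanSpace.single i 1⟫

/-- `g` is the weak gradient of `f`: both are locally integrable and
`∫ f div h = −∫ ⟪g, h⟫` for all smooth compactly supported vector fields `h`. -/
def HasWeakGradient (f : E → ℝ) (g : E → E) : Prop :=
  LocallyIntegrable f volume ∧ LocallyIntegrable g volume ∧
  ∀ h : E → E, ContDiff ℝ (⊤ : ℕ∞) h → HasCompactSupport h →
    ∫ x, f x * dvg h x = - ∫ x, ⟪g x, h x⟫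

/-!
If functions converge in `L¹_loc` and so do their weak gradients, then the limit of the gradients is
the weak gradient of the limit. Mollification commutes with the weak gradient, so the classical
chain rule for the mollifications of `f` passes to the limit and shows that `θ ∘ f` has weak
gradient `θ'(f) ∇f` for every `C¹` Lipschitz `θ`. The logarithm is not Lipschitz, but
`t ↦ log √(t² + ε²)` is, with derivative `t / (t² + ε²)`. As `ε → 0`, both function and gradient
converge by dominated convergence: the first is within `|f| + |log |f||` of `log |f|` when `ε ≤ 1`,
the second within `|∇f| / |f|` of `∇f / f`.
-/

open Filter Topology Metric ContinuousLinearMap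
open scoped Convolution ContDiff NNReal

section L1Loc

variable {X ι F : Type*} [TopologicalSpace X] [MeasurableSpace X] [NormedAddCommGroup F]

/-- Convergence of `u i` to `v` along `l` in `L¹_loc(μ)`: the `L¹` distance tends to `0` on every
compact set. The functions themselves need not be locally integrable. -/
def TendstoL1Loc (u : ι → X → F) (l : Filter ι) (v : X → F) (μ : Measure X) : Prop :=
  ∀ K : Set X, IsCompact K → Tendsto (fun i => ∫⁻ x in K, ‖u i x - v x‖ₑ ∂μ) l (𝓝 0)

variable {μ : Measure X} {l : Filter ι} {u : ι → X → F} {v : X → F}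

theorem locallyIntegrable_norm (hv : LocallyIntegrable v μ) :
    LocallyIntegrable (fun x => ‖v x‖) μ :=
  fun x => (hv x).norm

theorem locallyIntegrable_comp_of_lipschitzWith {F' : Type*} [NormedAddCommGroup F']
    [IsLocallyFiniteMeasure μ] {θ : F → F'} {C : ℝ≥0} (hθ : LipschitzWith C θ)
    (hv : LocallyIntegrable v μ) (hvm : AEStronglyMeasurable v μ) :
    LocallyIntegrable (fun x => θ (v x)) μ := by
  have hbound : LocallyIntegrable (fun x => ‖θ 0‖ + C * ‖v x‖) μ :=
    (locallyIntegrable_const _).add ((locallyIntegrable_norm hv).smul (C : ℝ))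
  refine hbound.mono (hθ.continuous.comp_aestronglyMeasurable hvm) (.of_forall fun x => ?_)
  calc ‖θ (v x)‖ ≤ ‖θ 0‖ + ‖θ (v x) - θ 0‖ := norm_le_norm_add_norm_sub' _ _
    _ ≤ ‖θ 0‖ + C * ‖v x‖ := by simpa using hθ.norm_sub_le (v x) 0
    _ ≤ _ := Real.le_norm_self _

theorem locallyIntegrable_smul_of_bounded [NormedSpace ℝ F] {b : X → ℝ} {C : ℝ}
    (hb : AEStronglyMeasurable b μ) (hbC : ∀ x, ‖b x‖ ≤ C) (hv : LocallyIntegrable v μ)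
    (hvm : AEStronglyMeasurable v μ) : LocallyIntegrable (fun x => b x • v x) μ := by
  have hbound : LocallyIntegrable (fun x => C * ‖v x‖) μ := (locallyIntegrable_norm hv).smul C
  refine hbound.mono (hb.smul hvm) (.of_forall fun x => ?_)
  calc ‖b x • v x‖ = ‖b x‖ * ‖v x‖ := norm_smul _ _
    _ ≤ C * ‖v x‖ := by gcongr; exact hbC x
    _ ≤ _ := Real.le_norm_self _

theorem tendstoL1Loc_of_dominated [l.IsCountablyGenerated] {B : X → ℝ}
    (hu : ∀ᶠ i in l, AEStronglyMeasurable (u i) μ) (hv : AEStronglyMeasurable v μ)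
    (hB : LocallyIntegrable B μ) (hbound : ∀ᶠ i in l, ∀ᵐ x ∂μ, ‖u i x - v x‖ ≤ B x)
    (hlim : ∀ᵐ x ∂μ, Tendsto (fun i => u i x) l (𝓝 (v x))) :
    TendstoL1Loc u l v μ := by
  intro K hK
  have hB_fin : ∫⁻ x in K, ‖B x‖ₑ ∂μ ≠ ⊤ := (hB.integrableOn_isCompact hK).2.ne
  have hbound' : ∀ᶠ i in l, ∀ᵐ x ∂μ.restrict K, ‖u i x - v x‖ₑ ≤ ‖B x‖ₑ :=
    hbound.mono fun i hi => ae_restrict_of_ae <| hi.mono fun x hx =>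
      enorm_le_iff_norm_le.2 (hx.trans (Real.le_norm_self _))
  have hlim' : ∀ᵐ x ∂μ.restrict K, Tendsto (fun i => ‖u i x - v x‖ₑ) l (𝓝 0) :=
    ae_restrict_of_ae <| hlim.mono fun x hx => by
      simpa using (hx.sub_const (v x)).enorm
  simpa using tendsto_lintegral_filter_of_dominated_convergence' _
    (hu.mono fun i hi => (hi.sub hv).restrict.enorm) hbound' hB_fin hlim'

theorem TendstoL1Loc.lipschitz_comp {F' : Type*} [NormedAddCommGroup F'] {θ : F → F'} {C : ℝ≥0}
    (hθ : LipschitzWith C θ) (h : TendstoL1Loc u l v μ) :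
    TendstoL1Loc (fun i x => θ (u i x)) l (fun x => θ (v x)) μ := by
  intro K hK
  refine tendsto_of_tendsto_of_tendsto_of_le_of_le tendsto_const_nhds
    (by simpa using ENNReal.Tendsto.const_mul (h K hK) (Or.inr (ENNReal.coe_ne_top (r := C))))
    (fun _ => zero_le) fun i => ?_
  rw [← lintegral_const_mul' _ _ ENNReal.coe_ne_top]
  refine lintegral_mono fun x => ?_
  simpa only [edist_eq_enorm_sub] using hθ (u i x) (v x)

theorem TendstoL1Loc.smul_of_bounded [NormedSpace ℝ F] [l.IsCountablyGenerated]
    {a : ι → X → ℝ} {b : X → ℝ} {C : ℝ≥0} (ha : ∀ i, AEStronglyMeasurable (a i) μ)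
    (hb : AEStronglyMeasurable b μ) (haC : ∀ i x, ‖a i x‖ ≤ C) (hbC : ∀ x, ‖b x‖ ≤ C)
    (hab : ∀ᵐ x ∂μ, Tendsto (fun i => a i x) l (𝓝 (b x)))
    (hv : LocallyIntegrable v μ) (hvm : AEStronglyMeasurable v μ) (h : TendstoL1Loc u l v μ) :
    TendstoL1Loc (fun i x => a i x • u i x) l (fun x => b x • v x) μ := by
  have hcoeff : TendstoL1Loc (fun i x => a i x • v x) l (fun x => b x • v x) μ := by
    refine tendstoL1Loc_of_dominated (B := fun x => (C + C : ℝ) * ‖v x‖)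
      (.of_forall fun i => (ha i).smul hvm) (hb.smul hvm)
      ((locallyIntegrable_norm hv).smul (C + C : ℝ))
      (.of_forall fun i => .of_forall fun x => ?_)
      (hab.mono fun x hx => hx.smul_const (v x))
    rw [← sub_smul, norm_smul]
    gcongr
    exact (norm_sub_le _ _).trans (add_le_add (haC i x) (hbC x))
  intro K hK
  have hmeas (i : ι) : AEMeasurable (fun x => ‖a i x • v x - b x • v x‖ₑ) (μ.restrict K) :=
    (((ha i).smul hvm).sub (hb.smul hvm)).restrict.enorm
  refine tendsto_of_tendsto_of_tendsto_of_le_of_le tendsto_const_nhds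
    (by simpa using (ENNReal.Tendsto.const_mul (h K hK)
      (Or.inr (ENNReal.coe_ne_top (r := C)))).add (hcoeff K hK)) (fun _ => zero_le) fun i => ?_
  rw [← lintegral_const_mul' _ _ ENNReal.coe_ne_top,
    ← lintegral_add_right' _ (hmeas i)]
  refine lintegral_mono fun x => ?_
  calc ‖a i x • u i x - b x • v x‖ₑ
      = ‖a i x • (u i x - v x) + (a i x • v x - b x • v x)‖ₑ := by
        rw [smul_sub, sub_add_sub_cancel]
    _ ≤ ‖a i x • (u i x - v x)‖ₑ + ‖a i x • v x - b x • v x‖ₑ := enorm_add_le _ _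
    _ ≤ C * ‖u i x - v x‖ₑ + ‖a i x • v x - b x • v x‖ₑ := by
        rw [enorm_smul]
        gcongr
        exact_mod_cast haC i x

variable [OpensMeasurableSpace X]
  {F₁ F₂ : Type*} [NormedAddCommGroup F₁] [NormedAddCommGroup F₂]
  [NormedSpace ℝ F] [NormedSpace ℝ F₁] [NormedSpace ℝ F₂]
  {w : X → F₁}

theorem integrable_bilin_of_hasCompactSupport (B : F →L[ℝ] F₁ →L[ℝ] F₂)
    (hv : LocallyIntegrable v μ) (hw : Continuous w) (hwc : HasCompactSupport w) :
    Integrable (fun x => B (v x) (w x)) μ := by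
  have hsupp : Function.support (fun x => B (v x) (w x)) ⊆ tsupport w :=
    Function.support_subset_iff'.2 fun x hx => by
      simp [image_eq_zero_of_notMem_tsupport hx]
  obtain ⟨C, hC⟩ := hw.bounded_above_of_compact_support hwc
  have hwm : AEStronglyMeasurable w (μ.restrict (tsupport w)) :=
    (hw.stronglyMeasurable_of_hasCompactSupport hwc).aestronglyMeasurable
  exact (integrableOn_iff_integrable_of_support_subset hsupp).1 <|
    B.integrable_of_bilin_of_bdd_right C (hv.integrableOn_isCompact hwc) hwm
      (.of_forall hC)

theorem TendstoL1Loc.tendsto_integral_bilin [T2Space X] (B : F →L[ℝ] F₁ →L[ℝ] F₂)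
    (h : TendstoL1Loc u l v μ) (hu : ∀ᶠ i in l, LocallyIntegrable (u i) μ)
    (hv : LocallyIntegrable v μ) (hw : Continuous w) (hwc : HasCompactSupport w) :
    Tendsto (fun i => ∫ x, B (u i x) (w x) ∂μ) l (𝓝 (∫ x, B (v x) (w x) ∂μ)) := by
  obtain ⟨C, hC⟩ := hw.bounded_above_of_compact_support hwc
  refine tendsto_integral_of_L1 _
    (integrable_bilin_of_hasCompactSupport B hv hw hwc).aestronglyMeasurable
    (hu.mono fun i hi => integrable_bilin_of_hasCompactSupport B hi hw hwc) ?_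
  have hM : ‖B‖ₑ * ENNReal.ofReal C ≠ ⊤ := ENNReal.mul_ne_top enorm_ne_top ENNReal.ofReal_ne_top
  refine tendsto_of_tendsto_of_tendsto_of_le_of_le tendsto_const_nhds
    (by simpa using ENNReal.Tendsto.const_mul (h _ hwc) (Or.inr hM)) (fun _ => zero_le)
    fun i => ?_
  have hpt : ∀ x, ‖B (u i x) (w x) - B (v x) (w x)‖ₑ ≤
      (tsupport w).indicator (fun x => ‖B‖ₑ * ENNReal.ofReal C * ‖u i x - v x‖ₑ) x := by
    intro x
    by_cases hx : x ∈ tsupport w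
    · calc ‖B (u i x) (w x) - B (v x) (w x)‖ₑ = ‖B (u i x - v x) (w x)‖ₑ := by simp
        _ ≤ ‖B (u i x - v x)‖ₑ * ‖w x‖ₑ := (B _).le_opENorm _
        _ ≤ ‖B‖ₑ * ‖u i x - v x‖ₑ * ‖w x‖ₑ := by
          gcongr
          exact B.le_opENorm _
        _ ≤ ‖B‖ₑ * ‖u i x - v x‖ₑ * ENNReal.ofReal C := by
          gcongr
          rw [← ofReal_norm]
          exact ENNReal.ofReal_le_ofReal (hC x)
        _ = _ := by rw [Set.indicator_of_mem hx]; ring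
    · simp [image_eq_zero_of_notMem_tsupport hx]
  calc ∫⁻ x, ‖B (u i x) (w x) - B (v x) (w x)‖ₑ ∂μ
      ≤ ∫⁻ x in tsupport w, ‖B‖ₑ * ENNReal.ofReal C * ‖u i x - v x‖ₑ ∂μ :=
        (lintegral_mono hpt).trans_eq (lintegral_indicator hwc.measurableSet _)
    _ = ‖B‖ₑ * ENNReal.ofReal C * ∫⁻ x in tsupport w, ‖u i x - v x‖ₑ ∂μ :=
        lintegral_const_mul' _ _ hM

end L1Loc

section Mollification

theorem exists_contDiffBump_tendsto_rOut (G : Type*) [NormedAddCommGroup G] :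
    ∃ φ : ℕ → ContDiffBump (0 : G), Tendsto (fun n => (φ n).rOut) atTop (𝓝 0) ∧
      ∀ n, (φ n).rOut ≤ 2 * (φ n).rIn := by
  refine ⟨fun n => ⟨1 / (n + 1), 2 * (1 / (n + 1)), by positivity, ?_⟩, ?_, fun n => le_rfl⟩
  · exact lt_mul_of_one_lt_left (by positivity) one_lt_two
  · simpa using tendsto_one_div_add_atTop_nhds_zero_nat (𝕜 := ℝ).const_mul 2

variable {G ι F : Type*} [NormedAddCommGroup G] [NormedSpace ℝ G] [FiniteDimensional ℝ G]
  [MeasurableSpace G] [BorelSpace G] {μ : Measure G} [μ.IsAddHaarMeasure]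
  [NormedAddCommGroup F] {u : G → F}

theorem tendsto_lintegral_enorm_comp_sub_right_sub (hu : Integrable u μ) :
    Tendsto (fun t => ∫⁻ x, ‖u (x - t) - u x‖ₑ ∂μ) (𝓝 0) (𝓝 0) := by
  have hmp (t : G) : MeasurePreserving (fun x : G => x - t) μ μ := measurePreserving_sub_right μ t
  have hLp : MemLp u 1 μ := memLp_one_iff_integrable.2 hu
  let translate (t : G) : C(G, G) := ⟨fun x => x - t, by fun_prop⟩
  have htranslate : Continuous translate :=
    ContinuousMap.continuous_of_continuous_uncurry _ (by
      change Continuous fun p : G × G => p.2 - p.1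
      fun_prop)
  have hlim : Tendsto (fun t => (hLp.comp_measurePreserving (hmp t)).toLp _) (𝓝 0)
      (𝓝 ((hLp.comp_measurePreserving (hmp 0)).toLp _)) :=
    (tendsto_const_nhds (x := hLp.toLp u)).compMeasurePreservingLp (htranslate.tendsto 0)
      hmp (hmp 0) ENNReal.one_ne_top
  simpa [eLpNorm_one_eq_lintegral_enorm] using (Lp.tendsto_Lp_iff_tendsto_eLpNorm'' _ _ _ _).1 hlim

theorem tendstoL1Loc_comp_sub_right (hu : LocallyIntegrable u μ) :
    TendstoL1Loc (fun t x => u (x - t)) (𝓝 0) u μ := by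
  intro K hK
  have hK' : IsCompact (cthickening 1 K) := hK.cthickening
  have hint : Integrable ((cthickening 1 K).indicator u) μ :=
    (integrable_indicator_iff hK'.measurableSet).2 (hu.integrableOn_isCompact hK')
  refine tendsto_of_tendsto_of_tendsto_of_le_of_le' tendsto_const_nhds
    (tendsto_lintegral_enorm_comp_sub_right_sub hint) (Eventually.of_forall fun _ => zero_le) ?_
  filter_upwards [ball_mem_nhds (0 : G) one_pos] with t ht
  have hmem (x : G) (hx : x ∈ K) : x - t ∈ cthickening 1 K :=
    mem_cthickening_of_dist_le _ x 1 _ hx (by simpa using (mem_ball_zero_iff.1 ht).le)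
  calc ∫⁻ x in K, ‖u (x - t) - u x‖ₑ ∂μ
      = ∫⁻ x in K, ‖(cthickening 1 K).indicator u (x - t) - (cthickening 1 K).indicator u x‖ₑ ∂μ :=
        setLIntegral_congr_fun hK.measurableSet fun x hx => by
          simp only [Set.indicator_of_mem (hmem x hx),
            Set.indicator_of_mem (self_subset_cthickening K hx)]
    _ ≤ _ := setLIntegral_le_lintegral _ _

theorem lintegral_enorm_normed (φ : ContDiffBump (0 : G)) :
    ∫⁻ t, ‖φ.normed μ t‖ₑ ∂μ = 1 := by
  rw [← ofReal_integral_norm_eq_lintegral_enorm φ.integrable_normed]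
  simp [abs_of_nonneg (φ.nonneg_normed _), φ.integral_normed]

variable [NormedSpace ℝ F] [CompleteSpace F]

theorem setLIntegral_enorm_normed_convolution_sub_le (φ : ContDiffBump (0 : G))
    (hu : LocallyIntegrable u μ) (s : Set G) :
    ∫⁻ x in s, ‖(φ.normed μ ⋆[lsmul ℝ ℝ, μ] u) x - u x‖ₑ ∂μ ≤
      ∫⁻ t, ‖φ.normed μ t‖ₑ * ∫⁻ x in s, ‖u (x - t) - u x‖ₑ ∂μ ∂μ := by
  have hpt (x : G) : ‖(φ.normed μ ⋆[lsmul ℝ ℝ, μ] u) x - u x‖ₑ ≤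
      ∫⁻ t, ‖φ.normed μ t‖ₑ * ‖u (x - t) - u x‖ₑ ∂μ := by
    have hconv : Integrable (fun t => φ.normed μ t • u (x - t)) μ :=
      φ.hasCompactSupport_normed.convolutionExists_left (lsmul ℝ ℝ) φ.continuous_normed hu x
    have heq : (φ.normed μ ⋆[lsmul ℝ ℝ, μ] u) x - u x =
        ∫ t, φ.normed μ t • (u (x - t) - u x) ∂μ := by
      simp_rw [smul_sub]
      rw [integral_sub hconv (φ.integrable_normed.smul_const _), φ.integral_normed_smul μ (u x)]
      rfl
    rw [heq]
    simpa only [enorm_smul] using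
      enorm_integral_le_lintegral_enorm fun t => φ.normed μ t • (u (x - t) - u x)
  have hmeas : AEMeasurable (Function.uncurry fun x t => ‖φ.normed μ t‖ₑ * ‖u (x - t) - u x‖ₑ)
      ((μ.restrict s).prod μ) := by
    have hu_sub : AEStronglyMeasurable (fun p : G × G => u (p.1 - p.2)) (μ.prod μ) :=
      hu.aestronglyMeasurable.comp_quasiMeasurePreserving
        (quasiMeasurePreserving_sub_of_right_invariant μ μ)
    refine AEMeasurable.mono_ac ?_
      (Measure.restrict_le_self.absolutelyContinuous.prod Measure.AbsolutelyContinuous.rfl)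
    exact (φ.continuous_normed.measurable.comp measurable_snd).enorm.aemeasurable.mul
      (hu_sub.sub hu.aestronglyMeasurable.comp_fst).enorm
  calc _ ≤ ∫⁻ x in s, ∫⁻ t, ‖φ.normed μ t‖ₑ * ‖u (x - t) - u x‖ₑ ∂μ ∂μ := lintegral_mono hpt
    _ = ∫⁻ t, ∫⁻ x in s, ‖φ.normed μ t‖ₑ * ‖u (x - t) - u x‖ₑ ∂μ ∂μ :=
        lintegral_lintegral_swap hmeas
    _ = _ := by simp_rw [lintegral_const_mul' _ _ enorm_ne_top]

theorem tendstoL1Loc_normed_convolution {l : Filter ι} {φ : ι → ContDiffBump (0 : G)}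
    (hφ : Tendsto (fun i => (φ i).rOut) l (𝓝 0)) (hu : LocallyIntegrable u μ) :
    TendstoL1Loc (fun i => (φ i).normed μ ⋆[lsmul ℝ ℝ, μ] u) l u μ := by
  intro K hK
  refine ENNReal.tendsto_nhds_zero.2 fun ε hε => ?_
  obtain ⟨δ, hδ, hball⟩ := eventually_nhds_iff_ball.1
    (ENNReal.tendsto_nhds_zero.1 (tendstoL1Loc_comp_sub_right hu K hK) ε hε)
  filter_upwards [hφ.eventually_lt_const hδ] with i hi
  have hker (t : G) : ‖(φ i).normed μ t‖ₑ * ∫⁻ x in K, ‖u (x - t) - u x‖ₑ ∂μ ≤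
      ‖(φ i).normed μ t‖ₑ * ε := by
    by_cases ht : t ∈ ball 0 (φ i).rOut
    · gcongr
      exact hball t (ball_subset_ball hi.le ht)
    · rw [← (φ i).support_normed_eq (μ := μ), Function.notMem_support] at ht
      simp [ht]
  calc _ ≤ ∫⁻ t, ‖(φ i).normed μ t‖ₑ * ∫⁻ x in K, ‖u (x - t) - u x‖ₑ ∂μ ∂μ :=
        setLIntegral_enorm_normed_convolution_sub_le (φ i) hu K
    _ ≤ ∫⁻ t, ‖(φ i).normed μ t‖ₑ * ε ∂μ := lintegral_mono hker
    _ = ε := by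
        rw [lintegral_mul_const _ (φ i).continuous_normed.measurable.enorm,
          lintegral_enorm_normed, one_mul]

end Mollification

section WeakGradient

section IntegrationByParts

variable {V : Type*} [NormedAddCommGroup V] [NormedSpace ℝ V] [MeasurableSpace V] [BorelSpace V]
  {μ : Measure V} {u φ : V → ℝ}

theorem integrable_mul_fderiv_of_hasCompactSupport [IsFiniteMeasureOnCompacts μ]
    (hu : Continuous u) (hφ : ContDiff ℝ 1 φ) (hφc : HasCompactSupport φ) (v : V) :
    Integrable (fun x => u x * fderiv ℝ φ x v) μ := by
  have hφ' : Continuous (fderiv ℝ φ) := hφ.continuous_fderiv one_ne_zero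
  exact (hu.mul (hφ'.clm_apply continuous_const)).integrable_of_hasCompactSupport
    (hφc.fderiv_apply ℝ v).mul_left

theorem integrable_fderiv_mul_of_hasCompactSupport [IsFiniteMeasureOnCompacts μ]
    (hu : ContDiff ℝ 1 u) (hφ : Continuous φ) (hφc : HasCompactSupport φ) (v : V) :
    Integrable (fun x => fderiv ℝ u x v * φ x) μ := by
  have hu' : Continuous (fderiv ℝ u) := hu.continuous_fderiv one_ne_zero
  exact ((hu'.clm_apply continuous_const).mul hφ).integrable_of_hasCompactSupport hφc.mul_left

theorem integral_mul_fderiv_eq_neg_of_hasCompactSupport [FiniteDimensional ℝ V]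
    [μ.IsAddHaarMeasure] (hu : ContDiff ℝ 1 u) (hφ : ContDiff ℝ 1 φ)
    (hφc : HasCompactSupport φ) (v : V) :
    ∫ x, u x * fderiv ℝ φ x v ∂μ = -∫ x, fderiv ℝ u x v * φ x ∂μ :=
  integral_mul_fderiv_eq_neg_fderiv_mul_of_integrable
    (integrable_fderiv_mul_of_hasCompactSupport hu hφ.continuous hφc v)
    (integrable_mul_fderiv_of_hasCompactSupport hu.continuous hφ hφc v)
    ((hu.continuous.mul hφ.continuous).integrable_of_hasCompactSupport hφc.mul_left)
    (fun x _ => hu.differentiable one_ne_zero x) (fun x _ => hφ.differentiable one_ne_zero x)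

end IntegrationByParts

theorem continuous_dvg {h : E → E} (hh : ContDiff ℝ 1 h) : Continuous (dvg h) := by
  have hh' : Continuous (fderiv ℝ h) := hh.continuous_fderiv one_ne_zero
  exact continuous_finsetSum _ fun i _ => (hh'.clm_apply continuous_const).inner continuous_const

theorem hasCompactSupport_dvg {h : E → E} (hc : HasCompactSupport h) : HasCompactSupport (dvg h) :=
  (hc.fderiv ℝ).comp_left (g := fun L : E →L[ℝ] E =>
    ∑ i, ⟪L (EuclideanSpace.single i 1), EuclideanSpace.single i 1⟫) (by simp)

theorem dvg_eq_sum_fderiv_apply {h : E → E} {x : E} (hh : DifferentiableAt ℝ h x) :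
    dvg h x = ∑ i, fderiv ℝ (fun y => h y i) x (EuclideanSpace.single i 1) :=
  Finset.sum_congr rfl fun i _ => by
    have hcoord : HasFDerivAt (fun y => h y i) (EuclideanSpace.proj i ∘SL fderiv ℝ h x) x :=
      (EuclideanSpace.proj (𝕜 := ℝ) i : E →L[ℝ] ℝ).hasFDerivAt.comp x hh.hasFDerivAt
    simp [hcoord.fderiv, EuclideanSpace.inner_single_right]

theorem dvg_smul_const {ψ : E → ℝ} {x : E} (hψ : DifferentiableAt ℝ ψ x) (v : E) :
    dvg (fun y => ψ y • v) x = fderiv ℝ ψ x v := by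
  conv_rhs => rw [← (EuclideanSpace.basisFun (Fin k) ℝ).sum_repr v]
  simp [dvg, fderiv_smul_const hψ v, EuclideanSpace.inner_single_right, mul_comm]

theorem inner_gradient_eq_sum_fderiv_mul (u : E → ℝ) (x v : E) :
    ⟪gradient u x, v⟫ = ∑ i, fderiv ℝ u x (EuclideanSpace.single i 1) * v i := by
  rw [inner_gradient_left]
  conv_lhs => rw [← (EuclideanSpace.basisFun (Fin k) ℝ).sum_repr v]
  simp [mul_comm]

theorem hasWeakGradient_gradient {u : E → ℝ} (hu : ContDiff ℝ 1 u) :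
    HasWeakGradient u (gradient u) := by
  have hgrad : Continuous (gradient u) :=
    (InnerProductSpace.toDual ℝ E).symm.continuous.comp (hu.continuous_fderiv one_ne_zero)
  refine ⟨hu.continuous.locallyIntegrable, hgrad.locallyIntegrable, fun h hh hc => ?_⟩
  have hcoord (i : Fin k) : ContDiff ℝ 1 fun x => h x i :=
    (by fun_prop : ContDiff ℝ ∞ _).of_le (by simp)
  have hcoordc (i : Fin k) : HasCompactSupport fun x => h x i :=
    hc.comp_left (g := fun v : E => v i) rfl
  simp_rw [dvg_eq_sum_fderiv_apply (hh.differentiable (by simp) _),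
    inner_gradient_eq_sum_fderiv_mul, Finset.mul_sum]
  rw [integral_finsetSum _ fun i _ => integrable_mul_fderiv_of_hasCompactSupport hu.continuous
      (hcoord i) (hcoordc i) _,
    integral_finsetSum _ fun i _ => integrable_fderiv_mul_of_hasCompactSupport hu
      (hcoord i).continuous (hcoordc i) _, ← Finset.sum_neg_distrib]
  exact Finset.sum_congr rfl fun i _ =>
    integral_mul_fderiv_eq_neg_of_hasCompactSupport hu (hcoord i) (hcoordc i) _

theorem HasWeakGradient.hasGradientAt_convolution {f : E → ℝ} {g : E → E}
    (hfg : HasWeakGradient f g) {ψ : E → ℝ} (hψ : ContDiff ℝ ∞ ψ) (hψc : HasCompactSupport ψ)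
    (x : E) :
    HasGradientAt (ψ ⋆[lsmul ℝ ℝ, volume] f) ((ψ ⋆[lsmul ℝ ℝ, volume] g) x) x := by
  obtain ⟨hf, hg, htest⟩ := hfg
  have hψ1 : ContDiff ℝ 1 ψ := hψ.of_le (by simp)
  have hψx : ContDiff ℝ ∞ fun y => ψ (x - y) := by fun_prop
  have hψxc : HasCompactSupport fun y => ψ (x - y) := hψc.comp_homeomorph (Homeomorph.subLeft x)
  have hdvg (v y : E) : dvg (fun y => ψ (x - y) • v) y = -fderiv ℝ ψ (x - y) v := by
    have hfderiv : HasFDerivAt (fun y => ψ (x - y)) (-fderiv ℝ ψ (x - y)) y := by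
      simpa [Function.comp_def] using (hψ1.differentiable one_ne_zero (x - y)).hasFDerivAt.comp y
        ((hasFDerivAt_id y).const_sub x)
    rw [dvg_smul_const hfderiv.differentiableAt, hfderiv.fderiv, neg_apply]
  have hfint := (hψc.fderiv ℝ).convolutionExists_left ((lsmul ℝ ℝ : ℝ →L[ℝ] ℝ →L[ℝ] ℝ).precompL E)
    (hψ1.continuous_fderiv one_ne_zero) hf x
  have hgint := hψc.convolutionExists_left (lsmul ℝ ℝ : ℝ →L[ℝ] E →L[ℝ] E) hψ.continuous hg x
  have hdual : InnerProductSpace.toDual ℝ E ((ψ ⋆[lsmul ℝ ℝ, volume] g) x) =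
      (fderiv ℝ ψ ⋆[(lsmul ℝ ℝ).precompL E, volume] f) x := by
    refine ContinuousLinearMap.ext fun v => ?_
    calc ⟪(ψ ⋆[lsmul ℝ ℝ, volume] g) x, v⟫
        = ∫ y, ⟪g y, ψ (x - y) • v⟫ := by
          rw [convolution_eq_swap, real_inner_comm, ← integral_inner hgint.integrable_swap]
          simp [real_inner_smul_right, real_inner_comm]
      _ = -∫ y, f y * dvg (fun y => ψ (x - y) • v) y := by
          rw [htest (fun y => ψ (x - y) • v) (hψx.smul contDiff_const) hψxc.smul_right, neg_neg]
      _ = ∫ y, (lsmul ℝ ℝ : ℝ →L[ℝ] ℝ →L[ℝ] ℝ).precompL E (fderiv ℝ ψ (x - y)) (f y) v := by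
          simp [hdvg, integral_neg, mul_comm]
      _ = (fderiv ℝ ψ ⋆[(lsmul ℝ ℝ).precompL E, volume] f) x v := by
          rw [convolution_eq_swap, ContinuousLinearMap.integral_apply hfint.integrable_swap]
  rw [hasGradientAt_iff_hasFDerivAt, hdual]
  exact hψc.hasFDerivAt_convolution_left (lsmul ℝ ℝ) hψ1 hf x

theorem HasWeakGradient.of_tendstoL1Loc {ι : Type*} {l : Filter ι} [l.NeBot]
    {f : E → ℝ} {g : E → E} {u : ι → E → ℝ} {G : ι → E → E}
    (huG : ∀ᶠ i in l, HasWeakGradient (u i) (G i))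
    (hf : LocallyIntegrable f) (hg : LocallyIntegrable g)
    (hu : TendstoL1Loc u l f volume) (hG : TendstoL1Loc G l g volume) : HasWeakGradient f g := by
  refine ⟨hf, hg, fun h hh hc => ?_⟩
  have hlim_u := hu.tendsto_integral_bilin (ContinuousLinearMap.mul ℝ ℝ)
    (huG.mono fun _ h => h.1) hf (continuous_dvg (hh.of_le (by simp))) (hasCompactSupport_dvg hc)
  have hlim_G := hG.tendsto_integral_bilin (innerSL ℝ)
    (huG.mono fun _ h => h.2.1) hg hh.continuous hc
  refine tendsto_nhds_unique hlim_u (hlim_G.neg.congr' (huG.mono fun _ hi => ?_))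
  exact (hi.2.2 h hh hc).symm

theorem hasGradientAt_comp_of_hasDerivAt {V : Type*} [NormedAddCommGroup V]
    [InnerProductSpace ℝ V] [CompleteSpace V] {u : V → ℝ} {x u' : V} {θ : ℝ → ℝ} {θ' : ℝ}
    (hθ : HasDerivAt θ θ' (u x)) (hu : HasGradientAt u u' x) :
    HasGradientAt (fun y => θ (u y)) (θ' • u') x := by
  rw [hasGradientAt_iff_hasFDerivAt, map_smul]
  exact hθ.comp_hasFDerivAt x hu.hasFDerivAt

theorem HasWeakGradient.comp_of_lipschitzWith {f : E → ℝ} {g : E → E} {θ : ℝ → ℝ} {C : ℝ≥0}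
    (hfg : HasWeakGradient f g) (hθ : ContDiff ℝ 1 θ) (hLip : LipschitzWith C θ) :
    HasWeakGradient (fun x => θ (f x)) (fun x => deriv θ (f x) • g x) := by
  have ⟨hf, hg, _⟩ := hfg
  have hθ' : Continuous (deriv θ) := hθ.continuous_deriv le_rfl
  have hθ'C (t : ℝ) : ‖deriv θ t‖ ≤ C := norm_deriv_le_of_lipschitz hLip
  have hθ'f : AEStronglyMeasurable (fun x => deriv θ (f x)) :=
    hθ'.comp_aestronglyMeasurable hf.aestronglyMeasurable
  obtain ⟨φ, hφ, hφ2⟩ := exists_contDiffBump_tendsto_rOut E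
  let F (n : ℕ) : E → ℝ := (φ n).normed volume ⋆[lsmul ℝ ℝ, volume] f
  let G (n : ℕ) : E → E := (φ n).normed volume ⋆[lsmul ℝ ℝ, volume] g
  have hF (n : ℕ) : ContDiff ℝ 1 (F n) :=
    (φ n).hasCompactSupport_normed.contDiff_convolution_left (lsmul ℝ ℝ) (φ n).contDiff_normed hf
  have hFG (n : ℕ) : HasWeakGradient (fun x => θ (F n x)) fun x => deriv θ (F n x) • G n x := by
    have hgrad (x : E) : HasGradientAt (fun x => θ (F n x)) (deriv θ (F n x) • G n x) x :=
      hasGradientAt_comp_of_hasDerivAt (hθ.differentiable one_ne_zero _).hasDerivAt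
        (hfg.hasGradientAt_convolution (φ n).contDiff_normed (φ n).hasCompactSupport_normed x)
    rw [← gradient_eq hgrad]
    exact hasWeakGradient_gradient (hθ.comp (hF n))
  have hF_ae : ∀ᵐ x, Tendsto (fun n => F n x) atTop (𝓝 (f x)) :=
    ContDiffBump.ae_convolution_tendsto_right_of_locallyIntegrable hφ (.of_forall hφ2) hf
  exact .of_tendstoL1Loc (.of_forall hFG)
    (locallyIntegrable_comp_of_lipschitzWith hLip hf hf.aestronglyMeasurable)
    (locallyIntegrable_smul_of_bounded hθ'f (fun _ => hθ'C _) hg hg.aestronglyMeasurable)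
    ((tendstoL1Loc_normed_convolution hφ hf).lipschitz_comp hLip)
    ((tendstoL1Loc_normed_convolution hφ hg).smul_of_bounded
      (fun n => (hθ'.comp (hF n).continuous).aestronglyMeasurable) hθ'f (fun _ _ => hθ'C _)
      (fun _ => hθ'C _) (hF_ae.mono fun _ hx => (hθ'.tendsto _).comp hx) hg
      hg.aestronglyMeasurable)

end WeakGradient

section RegularizedLog

variable {ε t : ℝ}

/-- The regularisation `log √(t² + ε²)` of `log |t|`, smooth on the whole line when `ε ≠ 0`. -/
def regLogAbs (ε t : ℝ) : ℝ := Real.log (t ^ 2 + ε ^ 2) / 2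

theorem contDiff_regLogAbs (hε : ε ≠ 0) {n : WithTop ℕ∞} : ContDiff ℝ n (regLogAbs ε) := by
  have hpos (t : ℝ) : t ^ 2 + ε ^ 2 ≠ 0 := by positivity
  exact (ContDiff.log (by fun_prop) hpos).div_const 2

theorem hasDerivAt_regLogAbs (hε : ε ≠ 0) (t : ℝ) :
    HasDerivAt (regLogAbs ε) (t / (t ^ 2 + ε ^ 2)) t := by
  have hpos : t ^ 2 + ε ^ 2 ≠ 0 := by positivity
  refine ((((hasDerivAt_pow 2 t).add_const (ε ^ 2)).log hpos).div_const 2).congr_deriv ?_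
  field_simp
  norm_num [mul_comm]

theorem abs_div_sq_add_sq_le_inv (hε : 0 < ε) (t : ℝ) : |t / (t ^ 2 + ε ^ 2)| ≤ ε⁻¹ := by
  rw [abs_div, abs_of_pos (a := t ^ 2 + ε ^ 2) (by positivity), div_le_iff₀ (by positivity),
    ← div_eq_inv_mul, le_div_iff₀ hε]
  nlinarith [sq_nonneg (|t| - ε), sq_abs t, abs_nonneg t]

theorem lipschitzWith_regLogAbs (hε : 0 < ε) : LipschitzWith ε⁻¹.toNNReal (regLogAbs ε) :=
  lipschitzWith_of_nnnorm_deriv_le (fun t => (hasDerivAt_regLogAbs hε.ne' t).differentiableAt)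
    fun t => by
      rw [(hasDerivAt_regLogAbs hε.ne' t).deriv, ← norm_toNNReal]
      exact Real.toNNReal_le_toNNReal (abs_div_sq_add_sq_le_inv hε t)

theorem regLogAbs_zero (t : ℝ) : regLogAbs 0 t = Real.log |t| := by
  simp [regLogAbs]

theorem log_abs_le_regLogAbs (ht : t ≠ 0) (ε : ℝ) : Real.log |t| ≤ regLogAbs ε t := by
  rw [← regLogAbs_zero]
  refine div_le_div_of_nonneg_right (Real.log_le_log (by positivity) ?_) zero_le_two
  linarith [sq_nonneg ε]

theorem regLogAbs_le_abs (ht : t ≠ 0) (hε : |ε| ≤ 1) : regLogAbs ε t ≤ |t| := by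
  have hsq : t ^ 2 + ε ^ 2 ≤ (|t| + 1) ^ 2 := by
    nlinarith [sq_abs t, sq_abs ε, abs_nonneg t, abs_nonneg ε]
  calc regLogAbs ε t ≤ Real.log ((|t| + 1) ^ 2) / 2 := by
        unfold regLogAbs
        gcongr
    _ = Real.log (|t| + 1) := by
        rw [Real.log_pow]
        ring
    _ ≤ |t| := by linarith [Real.log_le_sub_one_of_pos (x := |t| + 1) (by positivity)]

theorem norm_regLogAbs_sub_log_abs_le (ht : t ≠ 0) (hε : |ε| ≤ 1) :
    ‖regLogAbs ε t - Real.log |t|‖ ≤ ‖t‖ + ‖Real.log |t|‖ := by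
  simp only [Real.norm_eq_abs]
  rw [abs_of_nonneg (sub_nonneg.2 (log_abs_le_regLogAbs ht ε))]
  linarith [regLogAbs_le_abs ht hε, neg_le_abs (Real.log |t|)]

theorem abs_div_sq_add_sq_sub_inv_le (ht : t ≠ 0) (ε : ℝ) :
    |t / (t ^ 2 + ε ^ 2) - t⁻¹| ≤ |t|⁻¹ := by
  have hpos : 0 < t ^ 2 + ε ^ 2 := by positivity
  have hfactor : t / (t ^ 2 + ε ^ 2) - t⁻¹ = -(ε ^ 2 / (t ^ 2 + ε ^ 2)) * t⁻¹ := by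
    field_simp
    ring
  rw [hfactor, abs_mul, abs_neg, abs_inv, abs_of_nonneg (by positivity)]
  refine mul_le_of_le_one_left (by positivity) ((div_le_one hpos).2 ?_)
  linarith [sq_nonneg t]

theorem tendsto_regLogAbs (ht : t ≠ 0) :
    Tendsto (fun ε => regLogAbs ε t) (𝓝 0) (𝓝 (Real.log |t|)) := by
  have hcont : ContinuousAt (fun ε => regLogAbs ε t) 0 :=
    (ContinuousAt.log (by fun_prop) (by positivity)).div_const 2
  simpa only [regLogAbs_zero] using hcont.tendsto

theorem tendsto_div_sq_add_sq (ht : t ≠ 0) :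
    Tendsto (fun ε : ℝ => t / (t ^ 2 + ε ^ 2)) (𝓝 0) (𝓝 t⁻¹) := by
  have hcont : ContinuousAt (fun ε : ℝ => t / (t ^ 2 + ε ^ 2)) 0 :=
    ContinuousAt.div (by fun_prop) (by fun_prop) (by positivity)
  convert hcont.tendsto using 2
  field_simp
  simp

theorem HasWeakGradient.regLogAbs_comp {f : E → ℝ} {g : E → E} (hfg : HasWeakGradient f g)
    (hε : 0 < ε) :
    HasWeakGradient (fun x => regLogAbs ε (f x)) fun x => (f x / (f x ^ 2 + ε ^ 2)) • g x := by
  simpa only [(hasDerivAt_regLogAbs hε.ne' _).deriv] using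
    hfg.comp_of_lipschitzWith (contDiff_regLogAbs hε.ne') (lipschitzWith_regLogAbs hε)

end RegularizedLog

theorem hasWeakGradient_log_general {f : E → ℝ} {g : E → E} (hf0 : ∀ᵐ x, f x ≠ 0)
    (hfg : HasWeakGradient f g) (h1 : LocallyIntegrable fun x => ‖g x‖ / |f x|)
    (h2 : LocallyIntegrable fun x => Real.log |f x|) :
    HasWeakGradient (fun x => Real.log |f x|) fun x => (f x)⁻¹ • g x := by
  have ⟨hf, hg, _⟩ := hfg
  have hfm : AEStronglyMeasurable f := hf.aestronglyMeasurable
  have hgm : AEStronglyMeasurable g := hg.aestronglyMeasurable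
  have hquot : LocallyIntegrable fun x => (f x)⁻¹ • g x :=
    h1.mono (hfm.inv₀.smul hgm) (.of_forall fun x => by simp [norm_smul, div_eq_inv_mul])
  have hreg : ∀ᶠ ε in 𝓝[>] (0 : ℝ), HasWeakGradient (fun x => regLogAbs ε (f x))
      fun x => (f x / (f x ^ 2 + ε ^ 2)) • g x :=
    eventually_mem_nhdsWithin.mono fun _ hε => hfg.regLogAbs_comp hε
  have hsmall : ∀ᶠ ε in 𝓝[>] (0 : ℝ), |ε| ≤ 1 :=
    ((continuous_abs.tendsto' 0 0 abs_zero).eventually_le_const one_pos).filter_mono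
      nhdsWithin_le_nhds
  refine .of_tendstoL1Loc hreg h2 hquot ?_ ?_
  · refine tendstoL1Loc_of_dominated (B := fun x => ‖f x‖ + ‖Real.log |f x|‖)
      (hreg.mono fun _ h => h.1.aestronglyMeasurable) h2.aestronglyMeasurable
      ((locallyIntegrable_norm hf).add (locallyIntegrable_norm h2)) ?_ ?_
    · filter_upwards [hsmall] with ε hε
      filter_upwards [hf0] with x hx using norm_regLogAbs_sub_log_abs_le hx hε
    · filter_upwards [hf0] with x hx using (tendsto_regLogAbs hx).mono_left nhdsWithin_le_nhds
  · refine tendstoL1Loc_of_dominated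
      (hreg.mono fun _ h => h.2.1.aestronglyMeasurable) hquot.aestronglyMeasurable h1
      (.of_forall fun ε => ?_) ?_
    · filter_upwards [hf0] with x hx
      rw [← sub_smul, norm_smul, div_eq_inv_mul ‖g x‖]
      gcongr
      exact abs_div_sq_add_sq_sub_inv_le hx ε
    · filter_upwards [hf0] with x hx using
        ((tendsto_div_sq_add_sq hx).mono_left nhdsWithin_le_nhds).smul_const (g x)

/-- Chain rule for weak derivatives: if `f > 0` has weak gradient `∇f`, and both
`|∇f|/f` and `log f` are locally integrable, then `log f` is weakly differentiable
with weak gradient `∇f / f`. -/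
theorem hasWeakGradient_log
    (f : E → ℝ) (hfpos : ∀ x, 0 < f x) (g : E → E)
    (hfg : HasWeakGradient f g)
    (h1 : LocallyIntegrable (fun x => ‖g x‖ / f x) volume)
    (h2 : LocallyIntegrable (fun x => Real.log (f x)) volume) :
    HasWeakGradient (fun x => Real.log (f x)) (fun x => (f x)⁻¹ • g x) := by
  simpa only [abs_of_pos (hfpos _)] using hasWeakGradient_log_general
    (.of_forall fun x => (hfpos x).ne') hfg (by simpa only [abs_of_pos (hfpos _)] using h1)
    (by simpa only [abs_of_pos (hfpos _)] using h2)

end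
end

section
/- Let R : ℝ^d × ℝ^d → ℝ be locally integrable with a locally integrable weak gradient. Suppose there exist Borel functions g, h : ℝ^d → ℝ^d such that the weak gradient satisfies ∇_x R(x,y) = g(x) and ∇_y R(x,y) = h(y) for Lebesgue-almost every (x,y) ∈ ℝ^d × ℝ^d. Then there exist Borel functions F, G : ℝ^d → ℝ such that R(x,y) = F(x) + G(y) for Lebesgue-almost every (x,y). -/
/-!
Since `∇_x R(x, y) = g(x)` does not change with `y`, the difference `R(x, y + w) - R(x, y)` has
zero weak derivative in every direction `(v, 0)`, hence (after mollification) is almost everywhere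
invariant under the translation by `(v, 0)`. So all mixed second differences of `R` vanish almost
everywhere, and by Fubini there is a base point `(x₀, y₀)` for which
`R(x, y) = R(x, y₀) + R(x₀, y) - R(x₀, y₀)` almost everywhere.
-/

open MeasureTheory
open scoped RealInnerProductSpace

noncomputable section

variable {d : ℕ}

local notation "E" => EuclideanSpace ℝ (Fin d)

/-- Divergence of a vector field on `ℝ^d × ℝ^d`. -/
def dvg2 (h : E × E → E × E) (z : E × E) : ℝ :=
  (∑ i : Fin d, ⟪(fderiv ℝ h z (EuclideanSpace.single i 1, 0)).1, EuclideanSpace.single i 1⟫)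
    + ∑ i : Fin d, ⟪(fderiv ℝ h z ((0 : E), EuclideanSpace.single i 1)).2,
        EuclideanSpace.single i 1⟫

/-- `(gx, gy)` is the weak gradient of `R : ℝ^d × ℝ^d → ℝ`, with `gx = ∇_x R` the first
`d` components and `gy = ∇_y R` the last `d` components. -/
def HasWeakGradient2 (R : E × E → ℝ) (gx gy : E × E → E) : Prop :=
  LocallyIntegrable R volume ∧ LocallyIntegrable gx volume ∧ LocallyIntegrable gy volume ∧
  ∀ h : E × E → E × E, ContDiff ℝ (⊤ : ℕ∞) h → HasCompactSupport h →
    ∫ z, R z * dvg2 h z = - ∫ z, (⟪gx z, (h z).1⟫ + ⟪gy z, (h z).2⟫)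

open scoped Convolution ContDiff

theorem locallyIntegrable_comp_add_right {X F : Type*} [TopologicalSpace X] [AddGroup X]
    [ContinuousAdd X] [MeasurableSpace X] [BorelSpace X] [NormedAddCommGroup F]
    {f : X → F} {μ : Measure X} [μ.IsAddRightInvariant] (hf : LocallyIntegrable f μ) (w : X) :
    LocallyIntegrable (fun x => f (x + w)) μ := by
  refine (locallyIntegrable_map_homeomorph (Homeomorph.addRight w)).1 ?_
  rwa [Homeomorph.coe_addRight, map_add_right_eq_self μ w]

section WeakLineDeriv

variable {V F : Type*} [NormedAddCommGroup V] [NormedSpace ℝ V] [MeasurableSpace V]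
  [NormedAddCommGroup F] [NormedSpace ℝ F]

/-- `f'` is the weak derivative of `f` in the direction `v` with respect to the measure `μ`: the
integration by parts formula holds against all smooth compactly supported scalar functions.
Local integrability of both functions is part of the notion. Over a codomain that is not complete
all these Bochner integrals are `0`, and the formula is void. -/
structure HasWeakLineDeriv (f f' : V → F) (v : V) (μ : Measure V) : Prop where
  locallyIntegrable : LocallyIntegrable f μ
  locallyIntegrable_deriv : LocallyIntegrable f' μ
  integral_fderiv_smul : ∀ φ : V → ℝ, ContDiff ℝ ∞ φ → HasCompactSupport φ →
    ∫ x, fderiv ℝ φ x v • f x ∂μ = -∫ x, φ x • f' x ∂μ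

variable {f f₁ f' f₁' : V → F} {v : V} {μ : Measure V} {φ : V → ℝ}

theorem HasWeakLineDeriv.congr (hf : HasWeakLineDeriv f f' v μ) (h : f =ᵐ[μ] f₁)
    (h' : f' =ᵐ[μ] f₁') : HasWeakLineDeriv f₁ f₁' v μ where
  locallyIntegrable := hf.locallyIntegrable.congr h
  locallyIntegrable_deriv := hf.locallyIntegrable_deriv.congr h'
  integral_fderiv_smul φ hφ hφc := by
    rw [← integral_congr_ae (h.mono fun x hx => congrArg (fderiv ℝ φ x v • ·) hx),
      ← integral_congr_ae (h'.mono fun x hx => congrArg (φ x • ·) hx)]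
    exact hf.integral_fderiv_smul φ hφ hφc

variable [BorelSpace V]

theorem HasWeakLineDeriv.sub (hf : HasWeakLineDeriv f f' v μ) (hf₁ : HasWeakLineDeriv f₁ f₁' v μ) :
    HasWeakLineDeriv (f - f₁) (f' - f₁') v μ where
  locallyIntegrable := hf.locallyIntegrable.sub hf₁.locallyIntegrable
  locallyIntegrable_deriv := hf.locallyIntegrable_deriv.sub hf₁.locallyIntegrable_deriv
  integral_fderiv_smul φ hφ hφc := by
    have hdφ : Continuous fun x => fderiv ℝ φ x v :=
      (hφ.continuous_fderiv (by simp)).clm_apply continuous_const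
    have hdφc : HasCompactSupport fun x => fderiv ℝ φ x v := hφc.fderiv_apply ℝ v
    simp only [Pi.sub_apply, smul_sub]
    rw [integral_sub
        (hf.locallyIntegrable.integrable_smul_left_of_hasCompactSupport hdφ hdφc)
        (hf₁.locallyIntegrable.integrable_smul_left_of_hasCompactSupport hdφ hdφc),
      integral_sub
        (hf.locallyIntegrable_deriv.integrable_smul_left_of_hasCompactSupport hφ.continuous hφc)
        (hf₁.locallyIntegrable_deriv.integrable_smul_left_of_hasCompactSupport hφ.continuous hφc),
      hf.integral_fderiv_smul φ hφ hφc, hf₁.integral_fderiv_smul φ hφ hφc]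
    abel

variable [μ.IsAddLeftInvariant]

theorem HasWeakLineDeriv.comp_add_right (hf : HasWeakLineDeriv f f' v μ) (w : V) :
    HasWeakLineDeriv (fun x => f (x + w)) (fun x => f' (x + w)) v μ where
  locallyIntegrable := locallyIntegrable_comp_add_right hf.locallyIntegrable w
  locallyIntegrable_deriv := locallyIntegrable_comp_add_right hf.locallyIntegrable_deriv w
  integral_fderiv_smul φ hφ hφc := by
    have key := hf.integral_fderiv_smul (fun x => φ (x - w))
      (hφ.comp (contDiff_id.sub contDiff_const)) (hφc.comp_homeomorph (Homeomorph.subRight w))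
    rw [← integral_add_right_eq_self _ w, ← integral_add_right_eq_self (fun x => _ • f' x) w] at key
    simpa only [fderiv_comp_sub, add_sub_cancel_right] using key

variable [SFinite μ]

theorem HasWeakLineDeriv.fderiv_convolution (hf : HasWeakLineDeriv f f' v μ)
    (hφ : ContDiff ℝ ∞ φ) (hφc : HasCompactSupport φ) (x : V) :
    fderiv ℝ (f ⋆[(ContinuousLinearMap.lsmul ℝ ℝ).flip, μ] φ) x v =
      (f' ⋆[(ContinuousLinearMap.lsmul ℝ ℝ).flip, μ] φ) x := by
  have hreflect (t : V) : fderiv ℝ (fun t => φ (x - t)) t v = -fderiv ℝ φ (x - t) v := by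
    have hφt : HasFDerivAt φ (fderiv ℝ φ (x - t)) (x - t) :=
      (hφ.differentiable (by simp) _).hasFDerivAt
    have hcomp : HasFDerivAt (fun t => φ (x - t)) _ t :=
      hφt.comp t ((hasFDerivAt_id t).const_sub x)
    simp [hcomp.fderiv]
  have key := hf.integral_fderiv_smul (fun t => φ (x - t))
    (hφ.comp (contDiff_const.sub contDiff_id)) (hφc.comp_homeomorph (Homeomorph.subLeft x))
  simp only [hreflect, neg_smul, integral_neg, neg_inj] at key
  rw [(hφc.hasFDerivAt_convolution_right _ hf.locallyIntegrable (hφ.of_le (by simp)) x).fderiv,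
    convolution_precompR_apply _ hf.locallyIntegrable (hφc.fderiv ℝ)
      (hφ.continuous_fderiv (by simp))]
  exact key

theorem HasWeakLineDeriv.convolution_eq_of_zero (hf : HasWeakLineDeriv f 0 v μ)
    (hφ : ContDiff ℝ ∞ φ) (hφc : HasCompactSupport φ) :
    (f ⋆[(ContinuousLinearMap.lsmul ℝ ℝ).flip, μ] φ) v =
      (f ⋆[(ContinuousLinearMap.lsmul ℝ ℝ).flip, μ] φ) 0 := by
  set c := f ⋆[(ContinuousLinearMap.lsmul ℝ ℝ).flip, μ] φ
  have hline (t : ℝ) : HasDerivAt (fun t : ℝ => c (t • v)) 0 t := by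
    have hc : DifferentiableAt ℝ c (t • v) := (hφc.hasFDerivAt_convolution_right _
      hf.locallyIntegrable (hφ.of_le (by simp)) _).differentiableAt
    have hzero : fderiv ℝ c (t • v) v = 0 := by
      rw [hf.fderiv_convolution hφ hφc, zero_convolution, Pi.zero_apply]
    have h := hc.hasFDerivAt.comp_hasDerivAt t ((hasDerivAt_id t).smul_const v)
    rwa [one_smul, hzero] at h
  simpa using is_const_of_deriv_eq_zero (fun t => (hline t).differentiableAt)
    (fun t => (hline t).deriv) 1 0

variable [FiniteDimensional ℝ V] [CompleteSpace F]

theorem HasWeakLineDeriv.ae_comp_add_eq_of_zero (hf : HasWeakLineDeriv f 0 v μ) :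
    ∀ᵐ x ∂μ, f (x + v) = f x := by
  refine ae_eq_of_integral_contDiff_smul_eq
    (locallyIntegrable_comp_add_right hf.locallyIntegrable v)
    hf.locallyIntegrable fun ψ hψ hψc => ?_
  have hconv (w : V) : ∫ x, ψ x • f (x + w) ∂μ =
      (f ⋆[(ContinuousLinearMap.lsmul ℝ ℝ).flip, μ] fun x => ψ (-x)) w := by
    rw [convolution_def, ← integral_sub_right_eq_self _ w]
    simp
  have hconst := hf.convolution_eq_of_zero (hψ.comp contDiff_neg)
    (hψc.comp_homeomorph (Homeomorph.neg V))
  calc ∫ x, ψ x • f (x + v) ∂μ = ∫ x, ψ x • f (x + 0) ∂μ := by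
        rw [hconv, hconv]; exact hconst
    _ = ∫ x, ψ x • f x ∂μ := by simp only [add_zero]

theorem HasWeakLineDeriv.ae_sub_comp_add_eq (hf : HasWeakLineDeriv f f' v μ) {w : V}
    (hw : ∀ᵐ x ∂μ, f' (x + w) = f' x) :
    ∀ᵐ x ∂μ, f (x + v + w) - f (x + v) = f (x + w) - f x :=
  (((hf.comp_add_right w).sub hf).congr .rfl
    (hw.mono fun _ hx => sub_eq_zero.2 hx)).ae_comp_add_eq_of_zero

end WeakLineDeriv

theorem ae_ae_eq_add_sub_of_ae_sub_eq_sub {X Y A : Type*}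
    [AddGroup X] [MeasurableSpace X] [MeasurableAdd₂ X]
    [AddGroup Y] [MeasurableSpace Y] [MeasurableAdd₂ Y]
    [AddCommGroup A] [TopologicalSpace A] [IsTopologicalAddGroup A]
    [TopologicalSpace.MetrizableSpace A]
    {μ : Measure X} {ν : Measure Y} [SFinite μ] [SFinite ν]
    [μ.IsAddLeftInvariant] [ν.IsAddLeftInvariant]
    {f : X × Y → A} (hf : StronglyMeasurable f)
    (hdiff : ∀ u v, ∀ᵐ p ∂μ.prod ν,
      f (p.1 + u, p.2 + v) - f (p.1 + u, p.2) = f (p.1, p.2 + v) - f p) :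
    ∀ᵐ p ∂μ.prod ν, ∀ᵐ q ∂μ.prod ν, f q = f (q.1, p.2) + (f (p.1, q.2) - f p) := by
  have hdiff_ae : ∀ᵐ p ∂μ.prod ν, ∀ᵐ t ∂μ.prod ν,
      f (p.1 + t.1, p.2 + t.2) - f (p.1 + t.1, p.2) = f (p.1, p.2 + t.2) - f p := by
    rw [Measure.ae_ae_comm]
    · exact .of_forall fun t => hdiff t.1 t.2
    · refine StronglyMeasurable.measurableSet_eq_fun
        (.sub (hf.comp_measurable ?_) (hf.comp_measurable ?_))
        (.sub (hf.comp_measurable ?_) (hf.comp_measurable ?_)) <;> fun_prop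
  filter_upwards [hdiff_ae] with p hp
  have htranslate := ((measurePreserving_add_left μ (-p.1)).prod
    (measurePreserving_add_left ν (-p.2))).quasiMeasurePreserving.ae hp
  filter_upwards [htranslate] with q hq
  simp only [Prod.map_fst, Prod.map_snd, add_neg_cancel_left] at hq
  exact sub_eq_iff_eq_add'.1 hq

theorem additive_decomposition_of_separated_gradient_general {V W A : Type*}
    [NormedAddCommGroup V] [NormedSpace ℝ V] [FiniteDimensional ℝ V]
    [MeasurableSpace V] [BorelSpace V]
    [NormedAddCommGroup W] [NormedSpace ℝ W] [FiniteDimensional ℝ W]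
    [MeasurableSpace W] [BorelSpace W]
    [NormedAddCommGroup A] [NormedSpace ℝ A] [CompleteSpace A]
    {μ : Measure V} {ν : Measure W} [μ.IsAddHaarMeasure] [ν.IsAddHaarMeasure]
    {R : V × W → A} {g : V → V → A}
    (hR : ∀ v, HasWeakLineDeriv R (fun z => g v z.1) (v, 0) (μ.prod ν)) :
    ∃ (F : V → A) (G : W → A), StronglyMeasurable F ∧ StronglyMeasurable G ∧
      ∀ᵐ z ∂μ.prod ν, R z = F z.1 + G z.2 := by
  obtain ⟨S, hS, hRS⟩ := (hR 0).locallyIntegrable.aestronglyMeasurable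
  have hdiff (v : V) (w : W) : ∀ᵐ z ∂μ.prod ν,
      S (z.1 + v, z.2 + w) - S (z.1 + v, z.2) = S (z.1, z.2 + w) - S z := by
    have h := ((hR v).congr hRS .rfl).ae_sub_comp_add_eq (w := (0, w)) (by simp)
    simpa [Prod.add_def] using h
  obtain ⟨⟨x₀, y₀⟩, hS₀⟩ := (ae_ae_eq_add_sub_of_ae_sub_eq_sub hS hdiff).exists
  exact ⟨fun x => S (x, y₀), fun y => S (x₀, y) - S (x₀, y₀),
    hS.comp_measurable measurable_prodMk_right,
    (hS.comp_measurable measurable_prodMk_left).sub stronglyMeasurable_const, hRS.trans hS₀⟩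

theorem dvg2_smul_fst {φ : E × E → ℝ} {z : E × E} (hφ : DifferentiableAt ℝ φ z) (v : E) :
    dvg2 (fun p => (φ p • v, 0)) z = fderiv ℝ φ z (v, 0) := by
  have hfield := (hφ.hasFDerivAt.smul_const v).prodMk (hasFDerivAt_const (0 : E) z)
  calc dvg2 (fun p => (φ p • v, 0)) z
      = ∑ i, v i * fderiv ℝ φ z (EuclideanSpace.single i 1, 0) := by
        simp [dvg2, hfield.fderiv, EuclideanSpace.inner_single_right, mul_comm]
    _ = (fderiv ℝ φ z).comp (.inl ℝ E E) (∑ i, v i • EuclideanSpace.single i 1) := by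
        simp [map_sum]
    _ = fderiv ℝ φ z (v, 0) := by
        rw [show ∑ i, v i • EuclideanSpace.single i 1 = v by
          simpa using (EuclideanSpace.basisFun (Fin d) ℝ).sum_repr v]
        simp

theorem HasWeakGradient2.hasWeakLineDeriv_fst {R : E × E → ℝ} {gx gy : E × E → E}
    (hgrad : HasWeakGradient2 R gx gy) (v : E) :
    HasWeakLineDeriv R (fun z => ⟪gx z, v⟫) (v, 0) volume := by
  obtain ⟨hR, hgx, -, hparts⟩ := hgrad
  refine ⟨hR, locallyIntegrableOn_univ.1 <|
    ((innerSL ℝ).flip v).locallyIntegrableOn_comp (hgx.locallyIntegrableOn _), fun φ hφ hφc => ?_⟩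
  have hφv := hparts (fun p => (φ p • v, 0)) ((hφ.smul contDiff_const).prodMk contDiff_const)
    (hφc.comp_left (g := fun t : ℝ => (t • v, (0 : E))) (by simp))
  simpa [dvg2_smul_fst (hφ.differentiable (by simp) _), real_inner_smul_right, mul_comm] using hφv

/-- If the weak gradient of `R(x,y)` satisfies `∇_x R(x,y) = g(x)` and
`∇_y R(x,y) = h(y)` a.e., then `R(x,y) = F(x) + G(y)` a.e. for some Borel `F, G`. -/
theorem additive_decomposition_of_separated_gradient
    (R : E × E → ℝ) (gx gy : E × E → E)
    (hgrad : HasWeakGradient2 R gx gy)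
    (g h : E → E) (hg : Measurable g) (hh : Measurable h)
    (hae : ∀ᵐ z ∂(volume : Measure (E × E)), gx z = g z.1 ∧ gy z = h z.2) :
    ∃ F G : E → ℝ, Measurable F ∧ Measurable G ∧
      ∀ᵐ z ∂(volume : Measure (E × E)), R z = F z.1 + G z.2 := by
  have hR (v : E) :
      HasWeakLineDeriv R (fun z => ⟪g z.1, v⟫) (v, 0) ((volume : Measure E).prod volume) :=
    (hgrad.hasWeakLineDeriv_fst v).congr .rfl (hae.mono fun z hz => by simp only [hz.1])
  obtain ⟨F, G, hF, hG, hFG⟩ :=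
    additive_decomposition_of_separated_gradient_general (g := fun v x => ⟪g x, v⟫) hR
  exact ⟨F, G, hF.measurable, hG.measurable, hFG⟩

end
end
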